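/- Fix 1 < B < ∞ and M ∈ ℕ, and let A_M = {1, 2, …, M}. For each n ≥ 1 let t_{n,B}(M) be the unique solution s ≥ 0 of Σ_{(a_1,…,a_n)∈A_M^n} ( B^{ns} q_n(a_1,…,a_n)² )^{−s} = 1, and let t_B(M) = inf{ s ≥ 0 : lim_{n→∞} (1/n)·log( Σ_{(a_1,…,a_n)∈A_M^n} B^{−n s²} q_n(a_1,…,a_n)^{−2s} ) ≤ 0 }. Then lim_{n→∞} t_{n,B}(M) = t_B(M) and lim_{M→∞} t_B(M) = t_B, where t_B = inf{ s ≥ 0 : lim_{n→∞} (1/n)·log( Σ_{(a_1,…,a_n)∈ℕ^n} B^{−n s²} q_n(a_1,…,a_n)^{−2s} ) ≤ 0 }. -/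

import Mathlib

/-!
Splitting a word changes the continuant by at most a factor two:
`q(l) q(m) ≤ q(l ++ m) ≤ 2 q(l) q(m)`. Hence for `s ≥ 0` the partition sums
`S_n(s) = Σ B^{-n s²} q_n^{-2s}` over any alphabet satisfy
`S_{n+m} ≤ S_n S_m ≤ 4^s S_{n+m}`, and Fekete's lemma used in both directions
(`exists_pressure`) gives the pressure `L(s) = lim (1/n) log S_n(s)` together with the bound
`S_n(s) ≤ 4^s exp(n L(s))`.

Since `q_n ≥ 1`, the function `(1/n) log S_n + s² log B` is nonincreasing in `s`, so the pressure is
strictly decreasing (`fin_pressure_neg`). It is therefore positive to the left of `t_B(M)` and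
negative to the right, and so is eventually `(1/n) log S_n(s)`, whose zero is `t_{n,B}(M)`: this
is the first limit.

For the second limit, `t_B(M) ≤ t_B` because truncated sums are smaller than full ones. Conversely,
if `t_B(M) < s` for arbitrarily large `M`, then the truncated pressures at `s` are negative, so the
truncated sums are at most `4^s`. This bound does not depend on `M`, hence it holds for the full
sums, whose pressure is then nonpositive, and `t_B ≤ s` (`presInf_le_of_frequently`).
-/

open Filter Topology MeasureTheory
open scoped ENNReal NNReal

/-- The Gauss map `T(x) = 1/x - ⌊1/x⌋` (with `T 0 = 0`). -/
noncomputable def gaussMap (x : ℝ) : ℝ := if x = 0 then 0 else 1 / x - ⌊1 / x⌋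

/-- The `n`-th partial quotient `a_n(x) = ⌊1 / T^[n-1] x⌋` of the continued fraction
expansion of `x` (for `n ≥ 1`). -/
noncomputable def cfA (n : ℕ) (x : ℝ) : ℕ := ⌊1 / gaussMap^[n - 1] x⌋₊

/-- The continuant `q_n(a_1, …, a_n)`, defined by `q_{-1} = 0`, `q_0 = 1`,
`q_k = a_k q_{k-1} + q_{k-2}`. -/
def contQ (l : List ℕ) : ℕ := (l.foldl (fun p a => (p.2, a * p.2 + p.1)) (0, 1)).2

/-- The continuant numerator `p_n(a_1, …, a_n)`, defined by `p_{-1} = 1`, `p_0 = 0`,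
`p_k = a_k p_{k-1} + p_{k-2}`. -/
def contP (l : List ℕ) : ℕ := (l.foldl (fun p a => (p.2, a * p.2 + p.1)) (1, 0)).2

/-- `q_n(x) = q_n(a_1(x), …, a_n(x))`. -/
noncomputable def cfQ (x : ℝ) (n : ℕ) : ℕ := contQ (List.ofFn fun i : Fin n => cfA (i + 1) x)

/-- `p_n(x) = p_n(a_1(x), …, a_n(x))`. -/
noncomputable def cfP (x : ℝ) (n : ℕ) : ℕ := contP (List.ofFn fun i : Fin n => cfA (i + 1) x)

/-- The sum `Σ_{(a_1,…,a_n) ∈ ℕ^n} B^{-n c} · q_n(a_1,…,a_n)^{-2 s}` over all `n`-tuples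
of positive integers, computed in `ℝ≥0∞`. -/
noncomputable def presSum (B c s : ℝ) (n : ℕ) : ℝ≥0∞ :=
  ∑' a : Fin n → ℕ+,
    ENNReal.ofReal (B ^ (-(n : ℝ) * c) *
      (contQ (List.ofFn fun i => (a i : ℕ)) : ℝ) ^ (-2 * s))

/-- `inf { s ≥ 0 : lim_{n→∞} (1/n) · log( Σ_{(a_1,…,a_n)∈ℕ^n} B^{-n·c(s)} q_n^{-2s} ) ≤ 0 }`,
where the limit is required to exist (in `EReal`) and be `≤ 0`. -/
noncomputable def presInf (B : ℝ) (c : ℝ → ℝ) : ℝ :=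
  sInf {s : ℝ | 0 ≤ s ∧ ∃ P : EReal, P ≤ 0 ∧
    Tendsto (fun n : ℕ => (((n : ℝ)⁻¹ : ℝ) : EReal) * ENNReal.log (presSum B (c s) s n))
      atTop (nhds P)}

/-- The finite-alphabet sum `Σ_{(a_1,…,a_n) ∈ A_M^n} B^{-n s²} q_n(a_1,…,a_n)^{-2s}`, where
`A_M = {1, …, M}` (indexed here by `Fin M` via `a ↦ a + 1`). -/
noncomputable def finPresSum (B : ℝ) (M : ℕ) (s : ℝ) (n : ℕ) : ℝ :=
  ∑ a : Fin n → Fin M,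
    B ^ (-(n : ℝ) * s ^ 2) * (contQ (List.ofFn fun i => (a i : ℕ) + 1) : ℝ) ^ (-2 * s)

/-- `t_B(M) = inf { s ≥ 0 : lim_{n→∞} (1/n) log( Σ_{A_M^n} B^{-n s²} q_n^{-2s} ) ≤ 0 }`. -/
noncomputable def tBM (B : ℝ) (M : ℕ) : ℝ :=
  sInf {s : ℝ | 0 ≤ s ∧ ∃ P : ℝ, P ≤ 0 ∧
    Tendsto (fun n : ℕ => Real.log (finPresSum B M s n) / n) atTop (nhds P)}

/-! ### Continuants of concatenated words -/

/-- Positive entries keep `q_{k-1} ≤ q_k` along the continuant recursion. -/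
lemma foldl_fst_le_snd (l : List ℕ) (hl : ∀ x ∈ l, 1 ≤ x) (p : ℕ × ℕ) (hp : p.1 ≤ p.2) :
    (l.foldl (fun p a => (p.2, a * p.2 + p.1)) p).1 ≤
      (l.foldl (fun p a => (p.2, a * p.2 + p.1)) p).2 := by
  induction l generalizing p with
  | nil => simpa using hp
  | cons a l ih =>
    rw [List.foldl_cons]
    refine ih (fun x hx => hl x (List.mem_cons_of_mem _ hx)) _ ?_
    have : 1 ≤ a := hl a List.mem_cons_self
    dsimp only
    nlinarith

lemma foldl_mono (l : List ℕ) (p r : ℕ × ℕ) (h1 : p.1 ≤ r.1) (h2 : p.2 ≤ r.2) :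
    (l.foldl (fun p a => (p.2, a * p.2 + p.1)) p).2 ≤
      (l.foldl (fun p a => (p.2, a * p.2 + p.1)) r).2 := by
  induction l generalizing p r with
  | nil => simpa using h2
  | cons a l ih =>
    rw [List.foldl_cons, List.foldl_cons]
    refine ih _ _ h2 ?_
    dsimp only
    gcongr

/-- The continuant recursion is linear in its initial data. -/
lemma foldl_linear (l : List ℕ) (x y : ℕ) (p r : ℕ × ℕ) :
    (l.foldl (fun p a => (p.2, a * p.2 + p.1)) (x * p.1 + y * r.1, x * p.2 + y * r.2)).2 =
      x * (l.foldl (fun p a => (p.2, a * p.2 + p.1)) p).2 +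
      y * (l.foldl (fun p a => (p.2, a * p.2 + p.1)) r).2 := by
  induction l generalizing p r with
  | nil => simp
  | cons a l ih =>
    simp only [List.foldl_cons]
    rw [← ih]
    congr 3
    dsimp only
    ring

lemma contP_le_contQ (l : List ℕ) (hl : ∀ x ∈ l, 1 ≤ x) : contP l ≤ contQ l := by
  cases l with
  | nil => simp [contP, contQ]
  | cons a l =>
    have : 1 ≤ a := hl a List.mem_cons_self
    unfold contP contQ
    rw [List.foldl_cons, List.foldl_cons]
    apply foldl_mono <;> simp [this]

lemma contQ_append (l m : List ℕ) : contQ (l ++ m) =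
    contQ l * contQ m + (l.foldl (fun p a => (p.2, a * p.2 + p.1)) (0, 1)).1 * contP m := by
  have := foldl_linear m (contQ l) (l.foldl (fun p a => (p.2, a * p.2 + p.1)) (0, 1)).1
    (0, 1) (1, 0)
  unfold contQ contP at *
  rw [List.foldl_append, ← this]
  simp

lemma contQ_mul_le (l m : List ℕ) : contQ l * contQ m ≤ contQ (l ++ m) := by
  rw [contQ_append]; exact Nat.le_add_right _ _

lemma contQ_append_le (l m : List ℕ) (hl : ∀ x ∈ l, 1 ≤ x) (hm : ∀ x ∈ m, 1 ≤ x) :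
    contQ (l ++ m) ≤ 2 * (contQ l * contQ m) := by
  rw [contQ_append, two_mul]
  gcongr
  · exact foldl_fst_le_snd l hl (0, 1) (by simp)
  · exact contP_le_contQ m hm

lemma contQ_pos (l : List ℕ) (hl : ∀ x ∈ l, 1 ≤ x) : 1 ≤ contQ l := by
  induction l with
  | nil => simp [contQ]
  | cons a l ih =>
    have h := contQ_mul_le [a] l
    have h1 := ih (fun x hx => hl x (List.mem_cons_of_mem _ hx))
    have : 1 ≤ a := hl a List.mem_cons_self
    have h2 : contQ [a] = a := by simp [contQ]
    rw [h2] at h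
    simp only [List.singleton_append] at h
    nlinarith

lemma contQ_replicate_le (n : ℕ) : contQ (List.replicate n 1) ≤ 2 ^ n := by
  induction n with
  | zero => simp [contQ]
  | succ n ih =>
    have h := contQ_append_le [1] (List.replicate n 1) (by simp) (by simp)
    have h2 : contQ [1] = 1 := by simp [contQ]
    rw [h2] at h
    rw [List.replicate_succ, pow_succ]
    simp only [List.singleton_append] at h
    omega

/-! ### Partition sums over an arbitrary alphabet -/

/-- The summand `B^{-n s²} q^{-2s}`. -/
noncomputable def term (B s : ℝ) (n q : ℕ) : ℝ := B ^ (-(n : ℝ) * s ^ 2) * (q : ℝ) ^ (-2 * s)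

/-- The partition sum `Σ_{a ∈ ι^n} B^{-n s²} q_n(w(a_1),…,w(a_n))^{-2s}` over an arbitrary alphabet
`ι` whose letters stand for the integers `w i`. Both the full sum (`ι = ℕ+`) and the truncated
one (`ι = Fin M`) are of this form. -/
noncomputable def genSum {ι : Type} (w : ι → ℕ) (B s : ℝ) (n : ℕ) : ℝ≥0∞ :=
  ∑' a : Fin n → ι, ENNReal.ofReal (term B s n (contQ (List.ofFn fun i => w (a i))))

lemma term_pos {B s : ℝ} (hB : 1 < B) {n q : ℕ} (hq : 1 ≤ q) : 0 < term B s n q := by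
  have : (0 : ℝ) < q := by exact_mod_cast hq
  unfold term; positivity

lemma term_anti {B s : ℝ} (hB : 1 < B) (hs : 0 ≤ s) {n q r : ℕ} (hq : 1 ≤ q) (h : q ≤ r) :
    term B s n r ≤ term B s n q := by
  unfold term
  have : (0 : ℝ) < q := by exact_mod_cast hq
  have : (q : ℝ) ≤ r := by exact_mod_cast h
  have := Real.rpow_le_rpow_of_nonpos ‹0 < (q : ℝ)› this (show -2 * s ≤ 0 by linarith)
  gcongr

lemma term_mul {B s : ℝ} (hB : 1 < B) {n m q r : ℕ} :
    term B s (n + m) (q * r) = term B s n q * term B s m r := by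
  unfold term
  push_cast
  rw [Real.mul_rpow (by positivity) (by positivity),
    show -((n : ℝ) + m) * s ^ 2 = -(n : ℝ) * s ^ 2 + -(m : ℝ) * s ^ 2 by ring,
    Real.rpow_add (by linarith)]
  ring

lemma term_two_mul {B s : ℝ} {n q : ℕ} :
    term B s n q = 4 ^ s * term B s n (2 * q) := by
  unfold term
  push_cast
  rw [Real.mul_rpow (by positivity) (by positivity),
    Real.rpow_mul (show (0 : ℝ) ≤ 2 by norm_num) (-2) s,
    show ((2 : ℝ) ^ (-2 : ℝ)) = 4⁻¹ by
      rw [Real.rpow_neg (by norm_num)]; norm_num, Real.inv_rpow (by norm_num)]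
  have : (0 : ℝ) < 4 ^ s := by positivity
  field_simp

/-- Since `q ≥ 1`, raising the exponent from `u` to `s` gains at least `B^{-n(s²-u²)}`. -/
lemma term_exponent_le {B u s : ℝ} (hB : 1 < B) (hus : u ≤ s) {n q : ℕ} (hq : 1 ≤ q) :
    term B s n q ≤ B ^ (-(n : ℝ) * (s ^ 2 - u ^ 2)) * term B u n q := by
  unfold term
  rw [← mul_assoc, ← Real.rpow_add (by linarith)]
  have h1 : (1 : ℝ) ≤ q := by exact_mod_cast hq
  have := Real.rpow_le_rpow_of_exponent_le h1 (show -2 * s ≤ -2 * u by linarith)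
  rw [show -(n : ℝ) * (s ^ 2 - u ^ 2) + -(n : ℝ) * u ^ 2 = -(n : ℝ) * s ^ 2 by ring]
  gcongr

lemma one_le_of_mem_ofFn {ι : Type} {w : ι → ℕ} (hw : ∀ i, 1 ≤ w i) {n : ℕ} (a : Fin n → ι) :
    ∀ x ∈ List.ofFn (fun i => w (a i)), 1 ≤ x := by
  intro x hx
  rw [List.mem_ofFn] at hx
  obtain ⟨i, rfl⟩ := hx
  exact hw _

lemma contQ_ofFn_pos {ι : Type} {w : ι → ℕ} (hw : ∀ i, 1 ≤ w i) {n : ℕ} (a : Fin n → ι) :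
    1 ≤ contQ (List.ofFn fun i => w (a i)) :=
  contQ_pos _ (one_le_of_mem_ofFn hw a)

lemma ofFn_append {ι : Type} (w : ι → ℕ) {n m : ℕ} (a : Fin n → ι) (b : Fin m → ι) :
    (List.ofFn fun i => w (Fin.append a b i)) =
      (List.ofFn fun i => w (a i)) ++ List.ofFn fun i => w (b i) := by
  rw [← List.ofFn_fin_append]
  congr 1
  ext i
  refine Fin.addCases (fun i => ?_) (fun i => ?_) i <;> simp

lemma genSum_add {ι : Type} (w : ι → ℕ) (B s : ℝ) (n m : ℕ) :
    genSum w B s (n + m) = ∑' (a : Fin n → ι) (b : Fin m → ι), ENNReal.ofReal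
      (term B s (n + m) (contQ ((List.ofFn fun i => w (a i)) ++ List.ofFn fun i => w (b i)))) := by
  unfold genSum
  rw [← (Fin.appendEquiv n m).tsum_eq, ENNReal.tsum_prod']
  simp only [Fin.appendEquiv, Equiv.coe_fn_mk, ofFn_append]

lemma genSum_mul {ι : Type} (w : ι → ℕ) (B s : ℝ) (n m : ℕ) :
    genSum w B s n * genSum w B s m = ∑' (a : Fin n → ι) (b : Fin m → ι),
      ENNReal.ofReal (term B s n (contQ (List.ofFn fun i => w (a i)))) *
      ENNReal.ofReal (term B s m (contQ (List.ofFn fun i => w (b i)))) := by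
  unfold genSum
  simp_rw [ENNReal.tsum_mul_left, ENNReal.tsum_mul_right]

lemma genSum_add_le {ι : Type} {w : ι → ℕ} (hw : ∀ i, 1 ≤ w i) {B s : ℝ} (hB : 1 < B)
    (hs : 0 ≤ s) (n m : ℕ) : genSum w B s (n + m) ≤ genSum w B s n * genSum w B s m := by
  rw [genSum_add, genSum_mul]
  refine ENNReal.tsum_le_tsum fun a => ENNReal.tsum_le_tsum fun b => ?_
  rw [← ENNReal.ofReal_mul (term_pos hB (contQ_ofFn_pos hw a)).le, ← term_mul hB]
  exact ENNReal.ofReal_le_ofReal (term_anti hB hs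
    (Nat.mul_pos (contQ_ofFn_pos hw a) (contQ_ofFn_pos hw b)) (contQ_mul_le _ _))

lemma genSum_mul_le {ι : Type} {w : ι → ℕ} (hw : ∀ i, 1 ≤ w i) {B s : ℝ} (hB : 1 < B)
    (hs : 0 ≤ s) (n m : ℕ) :
    genSum w B s n * genSum w B s m ≤ ENNReal.ofReal (4 ^ s) * genSum w B s (n + m) := by
  rw [genSum_add, genSum_mul, ← ENNReal.tsum_mul_left]
  simp_rw [← ENNReal.tsum_mul_left]
  refine ENNReal.tsum_le_tsum fun a => ENNReal.tsum_le_tsum fun b => ?_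
  rw [← ENNReal.ofReal_mul (term_pos hB (contQ_ofFn_pos hw a)).le, ← term_mul hB,
    ← ENNReal.ofReal_mul (by positivity), term_two_mul]
  apply ENNReal.ofReal_le_ofReal
  refine mul_le_mul_of_nonneg_left (term_anti hB hs ?_
    (contQ_append_le _ _ (one_le_of_mem_ofFn hw a) (one_le_of_mem_ofFn hw b))) (by positivity)
  exact (Nat.mul_pos (contQ_ofFn_pos hw a) (contQ_ofFn_pos hw b)).trans_le (contQ_mul_le _ _)

/-- The word `1…1` alone bounds the partition sum below by an exponential. -/
lemma le_genSum {ι : Type} {w : ι → ℕ} {o : ι} (ho : w o = 1) {B s : ℝ}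
    (hB : 1 < B) (hs : 0 ≤ s) (n : ℕ) : ENNReal.ofReal (term B s n (2 ^ n)) ≤ genSum w B s n := by
  refine le_trans ?_ (ENNReal.le_tsum (fun _ => o))
  simp only [ho, List.ofFn_const]
  exact ENNReal.ofReal_le_ofReal (term_anti hB hs (contQ_pos _ (by simp)) (contQ_replicate_le n))

lemma log_term_two_pow {B s : ℝ} (hB : 1 < B) (n : ℕ) :
    Real.log (term B s n (2 ^ n)) = n * (-s ^ 2 * Real.log B - 2 * s * Real.log 2) := by
  unfold term
  push_cast
  rw [Real.log_mul (by positivity) (by positivity), Real.log_rpow (by linarith),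
    Real.log_rpow (by positivity), Real.log_pow]
  ring

/-- The pressure exists by Fekete's lemma for the submultiplicative sequence `genSum`. Fekete's
lemma applied to `4^s / genSum`, submultiplicative as well, shows that `genSum` exceeds
`exp (n L)` by at most the factor `4^s`; this is the uniform bound that makes the truncation
`M → ∞` work. -/
lemma exists_pressure {ι : Type} {w : ι → ℕ} (hw : ∀ i, 1 ≤ w i) {o : ι} (ho : w o = 1) {B s : ℝ}
    (hB : 1 < B) (hs : 0 ≤ s) (hfin : ∀ n, genSum w B s n ≠ ⊤) :
    ∃ L : ℝ, Tendsto (fun n : ℕ => Real.log (genSum w B s n).toReal / n) atTop (𝓝 L) ∧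
      ∀ n : ℕ, n ≠ 0 → Real.log (genSum w B s n).toReal ≤ s * Real.log 4 + n * L := by
  have hlow (n : ℕ) : term B s n (2 ^ n) ≤ (genSum w B s n).toReal :=
    (ENNReal.ofReal_le_iff_le_toReal (hfin n)).1 (le_genSum ho hB hs n)
  have hpos0 (n : ℕ) : 0 < term B s n (2 ^ n) := term_pos hB Nat.one_le_two_pow
  have hpos (n : ℕ) : 0 < (genSum w B s n).toReal := (hpos0 n).trans_le (hlow n)
  have hsub : Subadditive fun n => Real.log (genSum w B s n).toReal := by
    intro m n
    rw [← Real.log_mul (hpos m).ne' (hpos n).ne', ← ENNReal.toReal_mul]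
    exact Real.log_le_log (hpos _) (ENNReal.toReal_mono
      (ENNReal.mul_ne_top (hfin m) (hfin n)) (genSum_add_le hw hB hs m n))
  have hsup : Subadditive fun n => s * Real.log 4 - Real.log (genSum w B s n).toReal := by
    intro m n
    have h := ENNReal.toReal_mono (ENNReal.mul_ne_top ENNReal.ofReal_ne_top (hfin (m + n)))
      (genSum_mul_le hw hB hs m n)
    rw [ENNReal.toReal_mul, ENNReal.toReal_mul, ENNReal.toReal_ofReal (by positivity)] at h
    have h := Real.log_le_log (mul_pos (hpos m) (hpos n)) h
    rw [Real.log_mul (hpos m).ne' (hpos n).ne', Real.log_mul (by positivity) (hpos _).ne',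
      Real.log_rpow (by norm_num)] at h
    dsimp only
    linarith
  have hbdd : BddBelow (Set.range fun n : ℕ => Real.log (genSum w B s n).toReal / n) := by
    refine ⟨min 0 (-s ^ 2 * Real.log B - 2 * s * Real.log 2), ?_⟩
    rintro _ ⟨n, rfl⟩
    rcases Nat.eq_zero_or_pos n with rfl | hn
    · simp
    · have hn' : (0 : ℝ) < n := by exact_mod_cast hn
      refine (min_le_right _ _).trans ?_
      dsimp only
      rw [le_div_iff₀ hn', mul_comm, ← log_term_two_pow hB n]
      exact Real.log_le_log (hpos0 n) (hlow n)
  have hlim := hsub.tendsto_lim hbdd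
  refine ⟨hsub.lim, hlim, fun n hn => ?_⟩
  have hlim' : Tendsto (fun n : ℕ => (s * Real.log 4 - Real.log (genSum w B s n).toReal) / n)
      atTop (𝓝 (-hsub.lim)) := by
    have := (tendsto_const_div_atTop_nhds_zero_nat (s * Real.log 4)).sub hlim
    simpa only [zero_sub, sub_div] using this
  have hb := hlim'.bddBelow_range
  have heq := tendsto_nhds_unique (hsup.tendsto_lim hb) hlim'
  have := hsup.lim_le_div hb hn
  rw [heq, le_div_iff₀ (by positivity)] at this
  nlinarith

/-! ### The truncated alphabet -/

lemma ofReal_finPresSum {B : ℝ} (hB : 1 < B) (M : ℕ) (s : ℝ) (n : ℕ) :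
    genSum (fun i : Fin M => (i : ℕ) + 1) B s n = ENNReal.ofReal (finPresSum B M s n) := by
  unfold genSum finPresSum
  rw [tsum_fintype, ENNReal.ofReal_sum_of_nonneg]
  · rfl
  · intro a _
    have : 0 < B := by linarith
    positivity

lemma finPresSum_nonneg {B : ℝ} (hB : 1 < B) (M : ℕ) (s : ℝ) (n : ℕ) :
    0 ≤ finPresSum B M s n := by
  have : 0 < B := by linarith
  unfold finPresSum
  positivity

lemma toReal_genSum_fin {B : ℝ} (hB : 1 < B) (M : ℕ) (s : ℝ) (n : ℕ) :
    (genSum (fun i : Fin M => (i : ℕ) + 1) B s n).toReal = finPresSum B M s n := by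
  rw [ofReal_finPresSum hB, ENNReal.toReal_ofReal (finPresSum_nonneg hB M s n)]

lemma finPresSum_pos {B : ℝ} (hB : 1 < B) {M : ℕ} (hM : 1 ≤ M) (s : ℝ) (n : ℕ) :
    0 < finPresSum B M s n := by
  have : Nonempty (Fin M) := ⟨⟨0, hM⟩⟩
  exact Finset.sum_pos (fun a _ => term_pos hB
    (contQ_ofFn_pos (w := fun i : Fin M => (i : ℕ) + 1) (by simp) a)) Finset.univ_nonempty

lemma finPresSum_exponent_le {B u s : ℝ} (hB : 1 < B) (hus : u ≤ s) (M n : ℕ) :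
    finPresSum B M s n ≤ B ^ (-(n : ℝ) * (s ^ 2 - u ^ 2)) * finPresSum B M u n := by
  unfold finPresSum
  rw [Finset.mul_sum]
  exact Finset.sum_le_sum fun a _ => term_exponent_le hB hus
    (contQ_ofFn_pos (w := fun i : Fin M => (i : ℕ) + 1) (by simp) a)

lemma finPresSum_anti {B u s : ℝ} (hB : 1 < B) (hu : 0 ≤ u) (hus : u ≤ s) (M n : ℕ) :
    finPresSum B M s n ≤ finPresSum B M u n := by
  refine (finPresSum_exponent_le hB hus M n).trans ?_
  refine mul_le_of_le_one_left (finPresSum_nonneg hB M u n) ?_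
  apply Real.rpow_le_one_of_one_le_of_nonpos hB.le
  have h : 0 ≤ s ^ 2 - u ^ 2 := by nlinarith
  have := mul_nonneg (Nat.cast_nonneg (α := ℝ) n) h
  linarith

lemma fin_pressure {B s : ℝ} (hB : 1 < B) (hs : 0 ≤ s) {M : ℕ} (hM : 1 ≤ M) :
    ∃ L : ℝ, Tendsto (fun n : ℕ => Real.log (finPresSum B M s n) / n) atTop (𝓝 L) ∧
      ∀ n : ℕ, n ≠ 0 → Real.log (finPresSum B M s n) ≤ s * Real.log 4 + n * L := by
  have := exists_pressure (w := fun i : Fin M => (i : ℕ) + 1) (by simp) (o := ⟨0, hM⟩) (by simp)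
    hB hs (fun n => by rw [ofReal_finPresSum hB]; exact ENNReal.ofReal_ne_top)
  simpa only [toReal_genSum_fin hB] using this

/-- The set whose infimum is `tBM B M`. -/
def finSet (B : ℝ) (M : ℕ) : Set ℝ := {s : ℝ | 0 ≤ s ∧ ∃ P : ℝ, P ≤ 0 ∧
    Tendsto (fun n : ℕ => Real.log (finPresSum B M s n) / n) atTop (nhds P)}

/-- The set whose infimum is `presInf B (fun s => s ^ 2)`. -/
def infSet (B : ℝ) : Set ℝ := {s : ℝ | 0 ≤ s ∧ ∃ P : EReal, P ≤ 0 ∧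
    Tendsto (fun n : ℕ => (((n : ℝ)⁻¹ : ℝ) : EReal) * ENNReal.log (presSum B (s ^ 2) s n))
      atTop (nhds P)}

/-- To the right of an element of `finSet` the pressure is strictly negative: it drops by at least
`(s² - u²) log B`. -/
lemma fin_pressure_neg {B s L : ℝ} (hB : 1 < B) {M : ℕ} (hM : 1 ≤ M) (hne : (finSet B M).Nonempty)
    (hs : tBM B M < s)
    (hL : Tendsto (fun n : ℕ => Real.log (finPresSum B M s n) / n) atTop (𝓝 L)) : L < 0 := by
  obtain ⟨u, ⟨hu, P, hP, hPlim⟩, hus⟩ := exists_lt_of_csInf_lt hne hs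
  have hlog := Real.log_pos hB
  have key : L ≤ P - (s ^ 2 - u ^ 2) * Real.log B := by
    refine le_of_tendsto_of_tendsto hL (hPlim.sub_const _) ?_
    filter_upwards [eventually_ge_atTop 1] with n hn
    have hn' : (0 : ℝ) < n := by exact_mod_cast hn
    have h := Real.log_le_log (finPresSum_pos hB hM s n) (finPresSum_exponent_le hB hus.le M n)
    rw [Real.log_mul (by positivity) (finPresSum_pos hB hM u n).ne',
      Real.log_rpow (by linarith)] at h
    rw [div_le_iff₀ hn', sub_mul, div_mul_cancel₀ _ hn'.ne']
    linarith
  have : 0 < (s ^ 2 - u ^ 2) * Real.log B := mul_pos (by nlinarith) hlog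
  linarith

/-! ### The full alphabet -/

lemma presSum_eq (B s : ℝ) (n : ℕ) :
    presSum B (s ^ 2) s n = genSum (fun a : ℕ+ => (a : ℕ)) B s n := rfl

/-- The full sum is the supremum of the truncated ones: a finite set of words only involves
finitely many letters. -/
lemma genSum_le_of_frequently {B s : ℝ} {n : ℕ} {C : ℝ≥0∞}
    (h : ∃ᶠ M in atTop, genSum (fun i : Fin M => (i : ℕ) + 1) B s n ≤ C) :
    genSum (fun a : ℕ+ => (a : ℕ)) B s n ≤ C := by
  classical
  conv_lhs => unfold genSum
  rw [ENNReal.tsum_eq_iSup_sum]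
  refine iSup_le fun S => ?_
  let N := S.sup fun a => Finset.univ.sup fun i => (a i : ℕ)
  obtain ⟨M, hMN, hM⟩ := (frequently_atTop.1 h) N
  refine le_trans ?_ hM
  unfold genSum
  rw [tsum_fintype]
  let e : (Fin n → Fin M) → (Fin n → ℕ+) := fun b i => (b i : ℕ).succPNat
  have he : Function.Injective e := by
    intro b c hbc
    ext i
    have := congrArg (fun f => (f i : ℕ)) hbc
    simpa [e] using this
  have hS : S ⊆ Finset.univ.image e := by
    intro a ha
    rw [Finset.mem_image]
    have hle (i : Fin n) : (a i : ℕ) ≤ M := by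
      refine le_trans ?_ hMN
      exact (Finset.le_sup (f := fun i => (a i : ℕ)) (Finset.mem_univ i)).trans
        (Finset.le_sup (f := fun a : Fin n → ℕ+ => Finset.univ.sup fun i => (a i : ℕ)) ha)
    refine ⟨fun i => ⟨(a i : ℕ) - 1, ?_⟩, Finset.mem_univ _, ?_⟩
    · have := (a i).pos
      have := hle i
      omega
    · funext i
      apply PNat.eq
      have := (a i).pos
      simp only [e, Nat.succPNat_coe]
      omega
  refine (Finset.sum_le_sum_of_subset hS).trans ?_
  rw [Finset.sum_image he.injOn]
  simp [e]

lemma fin_le_genSum (B s : ℝ) (M n : ℕ) :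
    genSum (fun i : Fin M => (i : ℕ) + 1) B s n ≤ genSum (fun a : ℕ+ => (a : ℕ)) B s n := by
  let e : (Fin n → Fin M) → (Fin n → ℕ+) := fun b i => (b i : ℕ).succPNat
  have he : Function.Injective e := by
    intro b c hbc
    ext i
    have := congrArg (fun f => (f i : ℕ)) hbc
    simpa [e] using this
  exact ENNReal.tsum_comp_le_tsum_of_injective he
    (fun a => ENNReal.ofReal (term B s n (contQ (List.ofFn fun i => (a i : ℕ)))))

lemma genSum_zero {ι : Type} (w : ι → ℕ) (B s : ℝ) : genSum w B s 0 = 1 := by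
  unfold genSum
  rw [tsum_fintype]
  simp [term, contQ]

/-- A bound on the full sums that is uniform in `n` forces the pressure to be nonpositive. -/
lemma mem_infSet_of_le {B s : ℝ} (hB : 1 < B) (hs : 0 ≤ s) {C : ℝ}
    (h : ∀ n, genSum (fun a : ℕ+ => (a : ℕ)) B s n ≤ ENNReal.ofReal C) : s ∈ infSet B := by
  have hfin (n) : genSum (fun a : ℕ+ => (a : ℕ)) B s n ≠ ⊤ :=
    ((h n).trans_lt ENNReal.ofReal_lt_top).ne
  have hne (n) : genSum (fun a : ℕ+ => (a : ℕ)) B s n ≠ 0 := by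
    refine ne_of_gt (lt_of_lt_of_le ?_ (le_genSum (o := (1 : ℕ+)) (by simp) hB hs n))
    exact ENNReal.ofReal_pos.2 (term_pos hB Nat.one_le_two_pow)
  obtain ⟨L, hL, -⟩ := exists_pressure (w := fun a : ℕ+ => (a : ℕ)) (fun a => a.pos)
    (o := 1) (by simp) hB hs hfin
  have hC : 0 < C := by
    have := (pos_iff_ne_zero.2 (hne 0)).trans_le (h 0)
    exact ENNReal.ofReal_pos.1 this
  refine ⟨hs, (L : EReal), ?_, ?_⟩
  · have : L ≤ 0 := by
      refine le_of_tendsto_of_tendsto hL (tendsto_const_div_atTop_nhds_zero_nat (Real.log C)) ?_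
      refine Eventually.of_forall fun n => ?_
      dsimp only
      gcongr
      · exact ENNReal.toReal_pos (hne n) (hfin n)
      · exact ENNReal.toReal_le_of_le_ofReal hC.le (h n)
    exact_mod_cast this
  · have := (continuous_coe_real_ereal.tendsto L).comp hL
    refine this.congr fun n => ?_
    rw [presSum_eq, ENNReal.log_pos_real (hne n) (hfin n), ← EReal.coe_mul, Function.comp_apply,
      div_eq_inv_mul]

/-- For `s ≥ 1` with `B^{s²} ≥ ζ(2)` every full sum is at most one. -/
lemma infSet_nonempty {B : ℝ} (hB : 1 < B) : (infSet B).Nonempty := by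
  have hsum : Summable fun a : ℕ+ => ((a : ℕ) : ℝ) ^ (-2 : ℝ) :=
    (Real.summable_nat_rpow.2 (by norm_num)).comp_injective PNat.coe_injective
  set Z := ∑' a : ℕ+, ((a : ℕ) : ℝ) ^ (-2 : ℝ) with hZ
  have hB0 : 0 < B := by linarith
  obtain ⟨k, hk⟩ := pow_unbounded_of_one_lt Z hB
  set s : ℝ := k + 1 with hs
  have hs1 : 1 ≤ s := by simp [hs]
  have hZs : Z ≤ B ^ (s ^ 2) := by
    refine hk.le.trans ?_
    rw [← Real.rpow_natCast]
    exact Real.rpow_le_rpow_of_exponent_le hB.le (by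
      have : (0 : ℝ) ≤ k := Nat.cast_nonneg k
      nlinarith)
  have h1 : genSum (fun a : ℕ+ => (a : ℕ)) B s 1 ≤ 1 := by
    unfold genSum
    rw [← (Equiv.funUnique (Fin 1) ℕ+).symm.tsum_eq]
    calc _ ≤ ∑' a : ℕ+, ENNReal.ofReal (B ^ (-s ^ 2)) *
            ENNReal.ofReal (((a : ℕ) : ℝ) ^ (-2 : ℝ)) := by
          refine ENNReal.tsum_le_tsum fun a => ?_
          rw [← ENNReal.ofReal_mul (by positivity)]
          apply ENNReal.ofReal_le_ofReal
          have ha : (1 : ℝ) ≤ (a : ℕ) := by exact_mod_cast a.pos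
          have := Real.rpow_le_rpow_of_exponent_le ha (show -2 * s ≤ -2 by linarith)
          simp only [term, contQ]
          simp
          simp at this
          gcongr
      _ = ENNReal.ofReal (B ^ (-s ^ 2) * Z) := by
          rw [ENNReal.tsum_mul_left, ENNReal.ofReal_mul (by positivity), hZ,
            ENNReal.ofReal_tsum_of_nonneg (fun _ => by positivity) hsum]
      _ ≤ 1 := by
          rw [ENNReal.ofReal_le_one, Real.rpow_neg hB0.le]
          rw [inv_mul_le_iff₀ (by positivity)]
          simpa using hZs
  refine ⟨s, mem_infSet_of_le hB (by linarith) (C := 1) fun n => ?_⟩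
  rw [ENNReal.ofReal_one]
  induction n with
  | zero => rw [genSum_zero]
  | succ n ih =>
    exact (genSum_add_le (fun a : ℕ+ => a.pos) hB (by linarith) n 1).trans (mul_le_one' ih h1)

lemma infSet_subset_finSet {B : ℝ} (hB : 1 < B) {M : ℕ} (hM : 1 ≤ M) : infSet B ⊆ finSet B M := by
  rintro s ⟨hs, P, hP, hlim⟩
  obtain ⟨L, hL, -⟩ := fin_pressure hB hs hM
  refine ⟨hs, L, ?_, hL⟩
  have hL' := (continuous_coe_real_ereal.tendsto L).comp hL
  have : (L : EReal) ≤ P := by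
    refine le_of_tendsto_of_tendsto hL' hlim (Eventually.of_forall fun n => ?_)
    have hpos := finPresSum_pos hB hM s n
    have h := fin_le_genSum B s M n
    rw [ofReal_finPresSum hB] at h
    have h2 := ENNReal.log_monotone h
    rw [ENNReal.log_ofReal_of_pos hpos] at h2
    beta_reduce
    rw [Function.comp_apply, presSum_eq, div_eq_inv_mul, EReal.coe_mul]
    exact mul_le_mul_of_nonneg_left h2 (by exact_mod_cast inv_nonneg.2 (Nat.cast_nonneg n))
  exact_mod_cast this.trans hP

lemma tBM_nonneg (B : ℝ) (M : ℕ) : 0 ≤ tBM B M := Real.sInf_nonneg fun _ hs => hs.1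

lemma bddBelow_finSet (B : ℝ) (M : ℕ) : BddBelow (finSet B M) := ⟨0, fun _ hs => hs.1⟩

lemma tBM_le_presInf {B : ℝ} (hB : 1 < B) {M : ℕ} (hM : 1 ≤ M) :
    tBM B M ≤ presInf B (fun s => s ^ 2) :=
  csInf_le_csInf (bddBelow_finSet B M) (infSet_nonempty hB) (infSet_subset_finSet hB hM)

/-- If the truncated roots stay below `s` for arbitrarily large `M`, the truncated pressures at `s`
are negative, the truncated sums are at most `4^s`, and so are the full sums. -/
lemma presInf_le_of_frequently {B s : ℝ} (hB : 1 < B) (hs : 0 ≤ s)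
    (h : ∃ᶠ M in atTop, tBM B M < s) : presInf B (fun s => s ^ 2) ≤ s := by
  refine csInf_le (⟨0, fun _ hs => hs.1⟩ : BddBelow (infSet B))
    (mem_infSet_of_le hB hs (C := 4 ^ s) fun n => genSum_le_of_frequently ?_)
  refine (h.and_eventually (eventually_ge_atTop 1)).mono ?_
  rintro M ⟨hMs, hM⟩
  rcases eq_or_ne n 0 with rfl | hn
  · rw [genSum_zero, ENNReal.one_le_ofReal]
    exact Real.one_le_rpow (by norm_num) hs
  rw [ofReal_finPresSum hB]
  apply ENNReal.ofReal_le_ofReal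
  obtain ⟨L, hL, hbound⟩ := fin_pressure hB hs hM
  have hneg := fin_pressure_neg hB hM
    ((infSet_nonempty hB).mono (infSet_subset_finSet hB hM)) hMs hL
  have hb := hbound n hn
  rw [← Real.log_le_log_iff (finPresSum_pos hB hM s n) (by positivity),
    Real.log_rpow (by norm_num)]
  have := mul_nonneg (Nat.cast_nonneg (α := ℝ) n) (neg_nonneg.2 hneg.le)
  linarith

lemma sum_eq_finPresSum {B : ℝ} (hB : 1 < B) (M n : ℕ) (s : ℝ) :
    (∑ a : Fin n → Fin M,
        (B ^ ((n : ℝ) * s) * (contQ (List.ofFn fun i => (a i : ℕ) + 1) : ℝ) ^ 2) ^ (-s)) =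
      finPresSum B M s n := by
  have hB0 : 0 < B := by linarith
  unfold finPresSum
  refine Finset.sum_congr rfl fun a _ => ?_
  rw [Real.mul_rpow (by positivity) (by positivity), ← Real.rpow_mul hB0.le, ← Real.rpow_natCast,
    ← Real.rpow_mul (by positivity)]
  congr 2
  · ring
  · push_cast; ring

theorem tnBM_tendsto_tBM_tendsto_tB (B : ℝ) (hB : 1 < B) (M : ℕ) (hM : 1 ≤ M)
    (tn : ℕ → ℝ)
    (htn : ∀ n, 1 ≤ n → 0 ≤ tn n ∧
      (∑ a : Fin n → Fin M,
        (B ^ ((n : ℝ) * tn n) * (contQ (List.ofFn fun i => (a i : ℕ) + 1) : ℝ) ^ 2)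
          ^ (-(tn n))) = 1 ∧
      ∀ s : ℝ, 0 ≤ s →
        (∑ a : Fin n → Fin M,
          (B ^ ((n : ℝ) * s) * (contQ (List.ofFn fun i => (a i : ℕ) + 1) : ℝ) ^ 2)
            ^ (-s)) = 1 → s = tn n) :
    Tendsto tn atTop (nhds (tBM B M)) ∧
    Tendsto (fun M : ℕ => tBM B M) atTop (nhds (presInf B (fun s => s ^ 2))) := by
  refine ⟨tendsto_order.2 ⟨fun s hs => ?_, fun s hs => ?_⟩,
    tendsto_order.2 ⟨fun s hs => ?_, fun s hs => ?_⟩⟩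
  · rcases lt_or_ge s 0 with hs0 | hs0
    · filter_upwards [eventually_ge_atTop 1] with n hn
      exact hs0.trans_le (htn n hn).1
    obtain ⟨L, hL, -⟩ := fin_pressure hB hs0 hM
    -- `s` lies below the infimum although the limit exists, so the limit must be positive.
    have hLpos : 0 < L := by
      by_contra! hL0
      exact absurd (csInf_le (bddBelow_finSet B M) ⟨hs0, L, hL0, hL⟩) (not_le.2 hs)
    filter_upwards [hL.eventually_const_lt hLpos, eventually_ge_atTop 1] with n hn hn1
    obtain ⟨ht0, ht1, -⟩ := htn n hn1
    rw [sum_eq_finPresSum hB] at ht1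
    by_contra! hle
    have h := finPresSum_anti hB ht0 hle M n
    rw [ht1] at h
    have := Real.log_nonpos (finPresSum_nonneg hB M s n) h
    exact absurd hn (not_lt.2 (div_nonpos_of_nonpos_of_nonneg this (Nat.cast_nonneg n)))
  · have hs0 : 0 ≤ s := (tBM_nonneg B M).trans hs.le
    obtain ⟨L, hL, -⟩ := fin_pressure hB hs0 hM
    have hLneg := fin_pressure_neg hB hM
      ((infSet_nonempty hB).mono (infSet_subset_finSet hB hM)) hs hL
    filter_upwards [hL.eventually_lt_const hLneg, eventually_ge_atTop 1] with n hn hn1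
    obtain ⟨ht0, ht1, -⟩ := htn n hn1
    rw [sum_eq_finPresSum hB] at ht1
    by_contra! hle
    have h := finPresSum_anti hB hs0 hle M n
    rw [ht1] at h
    exact absurd hn (not_lt.2 (div_nonneg (Real.log_nonneg h) (Nat.cast_nonneg n)))
  · rcases lt_or_ge s 0 with hs0 | hs0
    · exact Eventually.of_forall fun M => hs0.trans_le (tBM_nonneg B M)
    obtain ⟨r, hsr, hr⟩ := exists_between hs
    by_contra hcon
    have hfreq : ∃ᶠ M in atTop, tBM B M < r :=
      (not_eventually.1 hcon).mono fun M hM => (not_lt.1 hM).trans_lt hsr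
    exact absurd (presInf_le_of_frequently hB (hs0.trans hsr.le) hfreq) (not_le.2 hr)
  · filter_upwards [eventually_ge_atTop 1] with M hM
    exact (tBM_le_presInf hB hM).trans_lt hs
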